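/- For every m ∈ ℕ and every Δ ∈ {≤, =, ≥}, three components suffice under the index-m restriction: L_m(CD_∞, CF[−λ], Δm) = L_m(CD_3, CF[−λ], Δm) and L_m(CD_∞, CF[−λ], (t∧Δm)) = L_m(CD_3, CF[−λ], (t∧Δm)), both with and without erasing rules. -/

import Mathlib

namespace CDHybrid

/-- Symbols: nonterminals are natural numbers, terminals come from `T`. -/
abbrev Symb (T : Type) := ℕ ⊕ T

/-- Sentential forms. -/
abbrev SForm (T : Type) := List (Symb T)

/-- A context-free rule `A → z`. -/
abbrev Rule (T : Type) := ℕ × SForm T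

/-- Number of nonterminal occurrences in a sentential form. -/
def ntCount {T : Type} (x : SForm T) : ℕ := (x.filter Sum.isLeft).length

/-- One rewriting step using some rule of the rule set `P`. -/
def RStep {T : Type} (P : List (Rule T)) (x y : SForm T) : Prop :=
  ∃ r ∈ P, ∃ u v : SForm T, x = u ++ Sum.inl r.1 :: v ∧ y = u ++ r.2 ++ v

/-- `m`-step derivation using only rules of `P`. -/
def StepsN {T : Type} (P : List (Rule T)) : ℕ → SForm T → SForm T → Prop
  | 0, x, y => x = y
  | m + 1, x, y => ∃ z, RStep P x z ∧ StepsN P m z y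

/-- `m`-step derivation using only rules of `P`, all intermediate (and the final)
sentential forms having at most `b` occurrences of nonterminals. -/
def StepsNB {T : Type} (P : List (Rule T)) (b : ℕ) : ℕ → SForm T → SForm T → Prop
  | 0, x, y => x = y
  | m + 1, x, y => ∃ z, RStep P x z ∧ ntCount z ≤ b ∧ StepsNB P b m z y

/-- Derivation modes of CD grammar systems. -/
inductive Mode where
  | eq : ℕ → Mode
  | le : ℕ → Mode
  | ge : ℕ → Mode
  | star : Mode
  | t : Mode
  | conj : Mode → Mode → Mode

/-- The predicate of a derivation mode: `modeOK P f m y` holds if an `m`-step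
derivation by the component `P` ending in `y` is acceptable for mode `f`. -/
def modeOK {T : Type} (P : List (Rule T)) : Mode → ℕ → SForm T → Prop
  | .eq k, m, _ => m = k
  | .le k, m, _ => m ≤ k
  | .ge k, m, _ => k ≤ m
  | .star, _, _ => True
  | .t, _, y => ¬ ∃ z, RStep P y z
  | .conj f g, m, y => modeOK P f m y ∧ modeOK P g m y

/-- A CD grammar system with context-free components. -/
structure CDGS (T : Type) where
  deg : ℕ
  start : ℕ
  comp : Fin deg → List (Rule T)

/-- λ-freeness: no erasing rules. -/
def CDGS.LamFree {T : Type} (G : CDGS T) : Prop :=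
  ∀ i : Fin G.deg, ∀ r ∈ G.comp i, r.2 ≠ []

/-- One derivation step of a component of `G` in mode `f`. -/
def CDGS.ModeStep {T : Type} (G : CDGS T) (f : Mode) (x y : SForm T) : Prop :=
  ∃ i : Fin G.deg, ∃ m : ℕ, StepsN (G.comp i) m x y ∧ modeOK (G.comp i) f m y

/-- One derivation step of a component of `G` in mode `f`, with all produced
sentential forms having at most `b` nonterminal occurrences. -/
def CDGS.ModeStepB {T : Type} (G : CDGS T) (f : Mode) (b : ℕ) (x y : SForm T) : Prop :=
  ∃ i : Fin G.deg, ∃ m : ℕ, StepsNB (G.comp i) b m x y ∧ modeOK (G.comp i) f m y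

/-- The language generated by `G` in mode `f`. -/
def CDGS.lang {T : Type} (G : CDGS T) (f : Mode) : Set (List T) :=
  { w | Relation.TransGen (G.ModeStep f) [Sum.inl G.start] (w.map Sum.inr) }

/-- The words of the language of `G` in mode `f` possessing a derivation of index
at most `b`, i.e., all sentential forms occurring in it have at most `b`
nonterminal occurrences. -/
def CDGS.langB {T : Type} (G : CDGS T) (f : Mode) (b : ℕ) : Set (List T) :=
  { w | ntCount ([Sum.inl G.start] : SForm T) ≤ b ∧
      Relation.TransGen (G.ModeStepB f b) [Sum.inl G.start] (w.map Sum.inr) }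

/-- Two languages are considered equal iff they differ at most in the empty word. -/
def EqL {T : Type} (L₁ L₂ : Set (List T)) : Prop := L₁ \ {[]} = L₂ \ {[]}

/-- The family `L(CD_n, CF[−λ], f)`; `lf = true` forbids erasing rules. -/
def CDFam (T : Type) (lf : Bool) (n : ℕ) (f : Mode) : Set (Set (List T)) :=
  { L | ∃ G : CDGS T, G.deg ≤ n ∧ (lf = true → G.LamFree) ∧ EqL (G.lang f) L }

/-- The family `L(CD_∞, CF[−λ], f)`. -/
def CDFamInf (T : Type) (lf : Bool) (f : Mode) : Set (Set (List T)) :=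
  { L | ∃ G : CDGS T, (lf = true → G.LamFree) ∧ EqL (G.lang f) L }

/-- The family `L_m(CD_n, CF[−λ], f)` of such languages of index at most `m`. -/
def CDFamInd (T : Type) (lf : Bool) (n : ℕ) (f : Mode) (m : ℕ) : Set (Set (List T)) :=
  { L | ∃ G : CDGS T, G.deg ≤ n ∧ (lf = true → G.LamFree) ∧ EqL (G.lang f) L ∧
      G.lang f ⊆ G.langB f m }

/-- The family `L_m(CD_∞, CF[−λ], f)`. -/
def CDFamIndInf (T : Type) (lf : Bool) (f : Mode) (m : ℕ) : Set (Set (List T)) :=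
  { L | ∃ G : CDGS T, (lf = true → G.LamFree) ∧ EqL (G.lang f) L ∧ G.lang f ⊆ G.langB f m }

/-- The family `L_fin(CD_∞, CF[−λ], f)`. -/
def CDFamFinInf (T : Type) (lf : Bool) (f : Mode) : Set (Set (List T)) :=
  { L | ∃ m : ℕ, 1 ≤ m ∧ L ∈ CDFamIndInf T lf f m }

/-- A context-free grammar. -/
structure CFG (T : Type) where
  start : ℕ
  rules : List (Rule T)

/-- The language generated by a context-free grammar. -/
def CFG.lang {T : Type} (G : CFG T) : Set (List T) :=
  { w | Relation.ReflTransGen (RStep G.rules) [Sum.inl G.start] (w.map Sum.inr) }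

/-- The words of `G.lang` having a derivation of index at most `m`. -/
def CFG.langB {T : Type} (G : CFG T) (m : ℕ) : Set (List T) :=
  { w | ntCount ([Sum.inl G.start] : SForm T) ≤ m ∧
      Relation.ReflTransGen (fun x y => RStep G.rules x y ∧ ntCount y ≤ m)
        [Sum.inl G.start] (w.map Sum.inr) }

/-- The family `L(CF)` of context-free languages. -/
def CFFam (T : Type) : Set (Set (List T)) := { L | ∃ G : CFG T, EqL G.lang L }

/-- The family `L_m(CF)` of context-free languages of index at most `m`. -/
def CFFamInd (T : Type) (m : ℕ) : Set (Set (List T)) :=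
  { L | ∃ G : CFG T, EqL G.lang L ∧ G.lang ⊆ G.langB m }

/-- The family `L_fin(CF)` of context-free languages of finite index. -/
def CFFamFin (T : Type) : Set (Set (List T)) :=
  { L | ∃ m : ℕ, 1 ≤ m ∧ L ∈ CFFamInd T m }

/-- A grammar is linear if every right-hand side contains at most one nonterminal. -/
def CFG.Linear {T : Type} (G : CFG T) : Prop := ∀ r ∈ G.rules, ntCount r.2 ≤ 1

/-- The family `L(LIN)` of linear context-free languages. -/
def LinFam (T : Type) : Set (Set (List T)) :=
  { L | ∃ G : CFG T, G.Linear ∧ EqL G.lang L }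

/-- The family `L(FIN)` of finite languages. -/
def FinFam (T : Type) : Set (Set (List T)) := { L | L.Finite }

/-- A programmed grammar with context-free rules. -/
structure PG (T : Type) where
  start : ℕ
  nLab : ℕ
  rule : Fin nLab → Rule T
  succ : Fin nLab → Set (Fin nLab)
  fail : Fin nLab → Set (Fin nLab)

def PG.LamFree {T : Type} (G : PG T) : Prop := ∀ r : Fin G.nLab, (G.rule r).2 ≠ []

/-- No appearance checking: all failure fields are empty. -/
def PG.NoAC {T : Type} (G : PG T) : Prop := ∀ r : Fin G.nLab, G.fail r = ∅

/-- One step of a programmed grammar on pairs (sentential form, label). -/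
def PG.PStep {T : Type} (G : PG T) (p q : SForm T × Fin G.nLab) : Prop :=
  (∃ u v : SForm T, p.1 = u ++ Sum.inl (G.rule p.2).1 :: v ∧
      q.1 = u ++ (G.rule p.2).2 ++ v ∧ q.2 ∈ G.succ p.2) ∨
  (Sum.inl (G.rule p.2).1 ∉ p.1 ∧ q.1 = p.1 ∧ q.2 ∈ G.fail p.2)

/-- The language generated by a programmed grammar. -/
def PG.lang {T : Type} (G : PG T) : Set (List T) :=
  { w | ∃ r₁ r₂ : Fin G.nLab,
      Relation.ReflTransGen G.PStep ([Sum.inl G.start], r₁) (w.map Sum.inr, r₂) }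

/-- The words of `G.lang` having a derivation of index at most `m`. -/
def PG.langB {T : Type} (G : PG T) (m : ℕ) : Set (List T) :=
  { w | ∃ r₁ r₂ : Fin G.nLab, ntCount ([Sum.inl G.start] : SForm T) ≤ m ∧
      Relation.ReflTransGen (fun p q => G.PStep p q ∧ ntCount q.1 ≤ m)
        ([Sum.inl G.start], r₁) (w.map Sum.inr, r₂) }

/-- The family `L_m(P, CF[−λ][, ac])`: programmed languages of index at most `m`;
`ac = false` forbids appearance checking, `lf = true` forbids erasing rules. -/
def PFamInd (T : Type) (lf ac : Bool) (m : ℕ) : Set (Set (List T)) :=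
  { L | ∃ G : PG T, (lf = true → G.LamFree) ∧ (ac = false → G.NoAC) ∧
      EqL G.lang L ∧ G.lang ⊆ G.langB m }

/-- The family `L_fin(P, CF[−λ][, ac])` of programmed languages of finite index. -/
def PFamFin (T : Type) (lf ac : Bool) : Set (Set (List T)) :=
  { L | ∃ m : ℕ, 1 ≤ m ∧ L ∈ PFamInd T lf ac m }


section Level1

def nts (y : SForm ℕ) : List ℕ := y.filterMap Sum.getLeft?
def shp (y : SForm ℕ) : List (Option ℕ) := y.map Sum.getRight?
def cnt (x : List (Option ℕ)) : ℕ := x.count none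

@[simp] theorem cnt_nil : cnt [] = 0 := rfl
@[simp] theorem cnt_none (x) : cnt (none :: x) = cnt x + 1 := by simp [cnt]
@[simp] theorem cnt_some (a x) : cnt (some a :: x) = cnt x := by simp [cnt]
@[simp] theorem cnt_append (x y) : cnt (x ++ y) = cnt x + cnt y := by simp [cnt]

theorem cnt_split (x : List (Option ℕ)) : ∀ i, i < cnt x →
    ∃ u v, x = u ++ none :: v ∧ cnt u = i := by
  induction x with
  | nil => intro i h; simp at h
  | cons a x ih =>
    intro i h
    cases a with
    | none =>
      cases i with
      | zero => exact ⟨[], x, rfl, rfl⟩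
      | succ i =>
        obtain ⟨u, v, h1, h2⟩ := ih i (by simpa using h)
        exact ⟨none :: u, v, by simp [h1], by simp [h2]⟩
    | some a =>
      obtain ⟨u, v, h1, h2⟩ := ih i (by simpa using h)
      exact ⟨some a :: u, v, by simp [h1], by simp [h2]⟩

@[simp] theorem nt_nil : ntCount ([] : SForm ℕ) = 0 := rfl
@[simp] theorem nt_inl (N : ℕ) (x : SForm ℕ) : ntCount (Sum.inl N :: x) = ntCount x + 1 := rfl
@[simp] theorem nt_inr (a : ℕ) (x : SForm ℕ) : ntCount (Sum.inr a :: x) = ntCount x := rfl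

/-- Good modes. -/
structure Good (m : ℕ) (f : Mode) : Prop where
  a : ∀ (P : List (Rule ℕ)) y, (¬ ∃ z, RStep P y z) → modeOK P f m y
  b : ∀ (P : List (Rule ℕ)) n y, modeOK P f n y → n ≤ m → n = m ∨ ¬ ∃ z, RStep P y z
  c : ∀ (P : List (Rule ℕ)) n y y', nts y = nts y' →
    (modeOK P f n y ↔ modeOK P f (min n (m + 1)) y')

variable {St : Type} [Denumerable St]

def sym (s : St) (n p : ℕ) : ℕ := Encodable.encode (s, n, p)
def unsym (St : Type) [Denumerable St] (N : ℕ) : St × ℕ × ℕ := Denumerable.ofNat (St × ℕ × ℕ) N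

@[simp] theorem unsym_sym (s : St) (n p : ℕ) : unsym St (sym s n p) = (s, n, p) := by
  simp [unsym, sym]

theorem sym_unsym (N : ℕ) : sym (unsym St N).1 (unsym St N).2.1 (unsym St N).2.2 = N :=
  Denumerable.encode_ofNat (α := St × ℕ × ℕ) N

def deco (s : St) : ℕ → List (Option ℕ) → SForm ℕ
  | _, [] => []
  | n, some a :: x => Sum.inr a :: deco s n x
  | n, none :: x => Sum.inl (sym s n 0) :: deco s (n + 1) x

theorem deco_append (s : St) (x y) : ∀ n, deco s n (x ++ y) = deco s n x ++ deco s (n + cnt x) y := by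
  induction x with
  | nil => intro n; simp [deco]
  | cons a x ih =>
    intro n
    cases a with
    | none => simp [deco, ih]; congr 1; omega
    | some a => simp [deco, ih]

theorem shp_deco (s : St) (x) : ∀ n, shp (deco s n x) = x := by
  induction x with
  | nil => intro n; rfl
  | cons a x ih =>
    intro n
    cases a with
    | none => simpa [deco, shp] using ih (n + 1)
    | some a => simpa [deco, shp] using ih n

theorem deco_map (s : St) (w : List ℕ) : ∀ n, deco s n (w.map some) = w.map Sum.inr := by
  induction w with
  | nil => intro n; rfl
  | cons a x ih => intro n; simp [deco, ih]

theorem ntCount_append (x y : SForm ℕ) : ntCount (x ++ y) = ntCount x + ntCount y := by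
  simp [ntCount]

theorem ntCount_deco (s : St) (x) : ∀ n, ntCount (deco s n x) = cnt x := by
  induction x with
  | nil => intro n; rfl
  | cons a x ih =>
    intro n
    cases a with
    | none => simpa [deco] using ih (n + 1)
    | some a => simpa [deco] using ih n

variable (m : ℕ) (width : St → ℕ) (act : Fin 3 → St → Option (ℕ × List (Option ℕ) × St))

def pad (s : St) (n : ℕ) : ℕ := if n = 0 then m - width s else 0

def fins (i : ℕ) (z : List (Option ℕ)) (s' : St) (n : ℕ) : SForm ℕ :=
  if n < i then deco s' n [none] else if n = i then deco s' i z
  else deco s' (n + cnt z - 1) [none]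

def rk (c : Fin 3) (t : St × ℕ × ℕ) : ℕ :=
  if (act c t.1).isSome ∧ t.2.1 < width t.1 then pad m width t.1 t.2.1 + 1 - t.2.2 else 0

def ph (c : Fin 3) (t : St × ℕ × ℕ) : SForm ℕ :=
  match act c t.1 with
  | none => [Sum.inl (sym t.1 t.2.1 t.2.2)]
  | some (i, z, s') =>
    if t.2.1 < width t.1 ∧ t.2.2 ≤ pad m width t.1 t.2.1 then fins i z s' t.2.1
    else [Sum.inl (sym t.1 t.2.1 t.2.2)]

def rhs (c : Fin 3) (t : St × ℕ × ℕ) : SForm ℕ :=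
  if t.2.2 < pad m width t.1 t.2.1 then [Sum.inl (sym t.1 t.2.1 (t.2.2 + 1))]
  else ph m width act c t

def rkS (c : Fin 3) : Symb ℕ → ℕ
  | Sum.inl N => rk m width act c (unsym St N)
  | Sum.inr _ => 0

def phS (c : Fin 3) : Symb ℕ → SForm ℕ
  | Sum.inl N => ph m width act c (unsym St N)
  | Sum.inr a => [Sum.inr a]

def mxS (c : Fin 3) : Symb ℕ → ℕ
  | Sum.inl N => max 1 (ntCount (ph m width act c (unsym St N)))
  | Sum.inr _ => 0

def RK (c : Fin 3) (x : SForm ℕ) : ℕ := (x.map (rkS m width act c)).sum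
def PH (c : Fin 3) (x : SForm ℕ) : SForm ℕ := x.flatMap (phS m width act c)
def MX (c : Fin 3) (x : SForm ℕ) : ℕ := (x.map (mxS m width act c)).sum

def HypA : Prop := ∀ c s i z s', act c s = some (i, z, s') →
  i < width s ∧ width s ≤ m ∧ width s' + 1 = width s + cnt z ∧ width s' ≤ m ∧ act c s' = none

def HypF : Prop := {s | ∃ c, act c s ≠ none}.Finite

section
variable (c : Fin 3)

theorem RK_append (x y) : RK m width act c (x ++ y) = RK m width act c x + RK m width act c y := by
  simp [RK]
theorem PH_append (x y) : PH m width act c (x ++ y) = PH m width act c x ++ PH m width act c y := by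
  simp [PH]
theorem MX_append (x y) : MX m width act c (x ++ y) = MX m width act c x + MX m width act c y := by
  simp [MX]

theorem RK_cons (x y) : RK m width act c (x :: y) = rkS m width act c x + RK m width act c y := by
  simp [RK]
theorem PH_cons (x y) : PH m width act c (x :: y) = phS m width act c x ++ PH m width act c y := by
  simp [PH]
theorem MX_cons (x y) : MX m width act c (x :: y) = mxS m width act c x + MX m width act c y := by
  simp [MX]

variable {m width act c}

/-- Symbols of a state without action are inert. -/
theorem inert {s : St} (h : act c s = none) (x) : ∀ n,
    RK m width act c (deco s n x) = 0 ∧ PH m width act c (deco s n x) = deco s n x ∧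
    MX m width act c (deco s n x) = cnt x := by
  induction x with
  | nil => intro n; simp [deco, RK, PH, MX]
  | cons a x ih =>
    intro n
    cases a with
    | none =>
      obtain ⟨h1, h2, h3⟩ := ih (n + 1)
      simp only [deco, RK_cons, PH_cons, MX_cons, h1, h2, h3]
      simp [rkS, phS, mxS, rk, ph, h]; omega
    | some a =>
      obtain ⟨h1, h2, h3⟩ := ih n
      simp only [deco, RK_cons, PH_cons, MX_cons, h1, h2, h3]
      simp [rkS, phS, mxS]

theorem fins_inert {i z} {s' : St} (h : act c s' = none) (n) :
    RK m width act c (fins i z s' n) = 0 ∧ PH m width act c (fins i z s' n) = fins i z s' n ∧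
    MX m width act c (fins i z s' n) = ntCount (fins i z s' n) := by
  unfold fins
  split_ifs
  all_goals rw [ntCount_deco]; exact inert h _ _

theorem rule_ok (H : HypA m width act) (t : St × ℕ × ℕ) (ht : 0 < rk m width act c t) :
    rk m width act c t = RK m width act c (rhs m width act c t) + 1 ∧
    PH m width act c (rhs m width act c t) = ph m width act c t ∧
    MX m width act c (rhs m width act c t) ≤ max 1 (ntCount (ph m width act c t)) := by
  obtain ⟨s, n, p⟩ := t
  have ht' := ht
  simp only [rk] at ht'
  split_ifs at ht' with h1
  · obtain ⟨h1, h2⟩ := h1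
    obtain ⟨⟨i, z, s'⟩, h3⟩ := Option.isSome_iff_exists.1 h1
    replace h2 : n < width s := h2
    replace h3 : act c s = some (i, z, s') := h3
    have hA := (H _ _ _ _ _ h3).2.2.2.2
    have hf := fins_inert (m := m) (width := width) (i := i) (z := z) hA n
    by_cases hp : p < pad m width s n
    · have e1 : p ≤ pad m width s n := hp.le
      have e2 : p + 1 ≤ pad m width s n := hp
      simp only [rhs, hp, if_true, RK_cons, PH_cons, MX_cons]
      simp [RK, PH, MX, rkS, phS, mxS, rk, ph, h3, h2, e1, e2]
      omega
    · have e1 : p ≤ pad m width s n := by omega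
      have e3 : ph m width act c (s, n, p) = fins i z s' n := by simp [ph, h3, h2, e1]
      simp only [rhs, hp, if_false, e3, hf]
      refine ⟨?_, trivial, le_max_right _ _⟩
      simp [rk, h3, h2]; omega
  · omega

theorem RK_zero_sym (a : Symb ℕ) (h : rkS m width act c a = 0) : phS m width act c a = [a] := by
  cases a with
  | inr a => rfl
  | inl N =>
    have e := sym_unsym (St := St) N
    simp only [rkS, rk] at h
    simp only [phS, ph]
    split
    · rw [e]
    · rename_i h3
      rw [e]
      simp only [h3, Option.isSome_some, true_and] at h
      split_ifs at h ⊢ <;> first | rfl | omega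

theorem RK_zero (x : SForm ℕ) (h : RK m width act c x = 0) : PH m width act c x = x := by
  induction x with
  | nil => rfl
  | cons a x ih =>
    rw [RK_cons] at h
    rw [PH_cons, ih (by omega), RK_zero_sym a (by omega)]; rfl

theorem nt_le_MX (x : SForm ℕ) : ntCount x ≤ MX m width act c x := by
  induction x with
  | nil => simp [ntCount, MX]
  | cons a x ih =>
    rw [MX_cons]
    cases a with
    | inl N =>
      simp only [mxS, nt_inl]; omega
    | inr a =>
      simp only [mxS, nt_inr]; omega

theorem finN (H : HypA m width act) (F : HypF act) (c : Fin 3) :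
    {N | 0 < rk m width act c (unsym St N)}.Finite := by
  have h1 : {t : St × ℕ × ℕ | 0 < rk m width act c t}.Finite := by
    refine Set.Finite.subset (F.prod ((Set.finite_Iic m).prod (Set.finite_Iic m))) ?_
    rintro ⟨s, n, p⟩ ht
    simp only [Set.mem_ofPred_eq, rk] at ht
    split_ifs at ht with h
    · obtain ⟨h1, h2⟩ := h
      obtain ⟨⟨i, z, s'⟩, h3⟩ := Option.isSome_iff_exists.1 h1
      replace h2 : n < width s := h2
      replace h3 : act c s = some (i, z, s') := h3
      have := H _ _ _ _ _ h3
      refine ⟨⟨c, by simp [h3]⟩, ?_, ?_⟩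
      · simp; omega
      · simp only [pad, Set.mem_Iic] at ht ⊢
        split_ifs at ht <;> omega
    · omega
  refine (h1.image (fun t => sym t.1 t.2.1 t.2.2)).subset ?_
  intro N hN
  exact ⟨unsym St N, hN, sym_unsym N⟩

noncomputable def Pc (H : HypA m width act) (F : HypF act) (c : Fin 3) : List (Rule ℕ) :=
  (finN H F c).toFinset.toList.map (fun N => (N, rhs m width act c (unsym St N)))

theorem mem_Pc (H : HypA m width act) (F : HypF act) (r) : r ∈ Pc H F c ↔
    ∃ N, 0 < rk m width act c (unsym St N) ∧ (N, rhs m width act c (unsym St N)) = r := by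
  simp [Pc]

theorem rstep_ok (H : HypA m width act) (F : HypF act) {x y} (h : RStep (Pc H F c) x y) :
    RK m width act c x = RK m width act c y + 1 ∧ PH m width act c y = PH m width act c x ∧
    MX m width act c y ≤ MX m width act c x := by
  obtain ⟨r, hr, u, v, rfl, rfl⟩ := h
  obtain ⟨N, hN, rfl⟩ := (mem_Pc H F r).1 hr
  obtain ⟨h1, h2, h3⟩ := rule_ok H _ hN
  simp only [RK_append, RK_cons, PH_append, PH_cons, MX_append, MX_cons, rkS, phS, mxS, h2]
  refine ⟨by omega, by simp, by omega⟩

theorem exists_rstep (H : HypA m width act) (F : HypF act) (x) (h : 0 < RK m width act c x) :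
    ∃ y, RStep (Pc H F c) x y := by
  induction x with
  | nil => simp [RK] at h
  | cons a x ih =>
    rw [RK_cons] at h
    by_cases h0 : 0 < RK m width act c x
    · obtain ⟨y, r, hr, u, v, rfl, rfl⟩ := ih h0
      exact ⟨_, r, hr, a :: u, v, rfl, rfl⟩
    · cases a with
      | inr a => simp [rkS] at h; omega
      | inl N =>
        exact ⟨_, _, (mem_Pc H F _).2 ⟨N, by simp only [rkS] at h; omega, rfl⟩, [], x, rfl, rfl⟩

theorem stepsN_ok (H : HypA m width act) (F : HypF act) (n) : ∀ {x y}, StepsN (Pc H F c) n x y →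
    RK m width act c x = RK m width act c y + n ∧ PH m width act c y = PH m width act c x := by
  induction n with
  | zero => rintro x y rfl; simp
  | succ n ih =>
    rintro x y ⟨z, h1, h2⟩
    obtain ⟨a1, a2, _⟩ := rstep_ok H F h1
    obtain ⟨b1, b2⟩ := ih h2
    exact ⟨by omega, by rw [b2, a2]⟩

theorem stepsNB_ex (H : HypA m width act) (F : HypF act) (b) (n) : ∀ {x}, RK m width act c x = n →
    MX m width act c x ≤ b → StepsNB (Pc H F c) b n x (PH m width act c x) := by
  induction n with
  | zero => intro x h _; exact (RK_zero x h).symm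
  | succ n ih =>
    intro x h hb
    obtain ⟨y, hy⟩ := exists_rstep (c := c) H F x (by omega)
    obtain ⟨a1, a2, a3⟩ := rstep_ok H F hy
    refine ⟨y, hy, (nt_le_MX y).trans (a3.trans hb), ?_⟩
    rw [← a2]
    exact ih (by omega) (a3.trans hb)

theorem stuck_iff (H : HypA m width act) (F : HypF act) (x) :
    (¬ ∃ y, RStep (Pc H F c) x y) ↔ RK m width act c x = 0 := by
  constructor
  · intro h
    by_contra h0
    exact h (exists_rstep H F x (by omega))
  · rintro h ⟨y, hy⟩
    have := (rstep_ok H F hy).1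
    omega

/-! Synchronised forms. -/

variable {s s' : St} {i : ℕ} {z : List (Option ℕ)}

theorem syncRK1 (h : act c s = some (i, z, s')) (v) : ∀ n, 1 ≤ n → n + cnt v ≤ width s →
    RK m width act c (deco s n v) = cnt v := by
  induction v with
  | nil => intro n _ _; simp [deco, RK]
  | cons a v ih =>
    intro n h1 h2
    cases a with
    | none =>
      simp only [cnt_none] at h2
      have := ih (n + 1) (by omega) (by omega)
      have e : n < width s := by omega
      have e2 : n ≠ 0 := by omega
      simp only [deco, RK_cons, this, cnt_none]
      simp [rkS, rk, h, e, pad, e2]; omega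
    | some a =>
      simp only [cnt_some] at h2
      have := ih n h1 h2
      simp only [deco, RK_cons, this, cnt_some]
      simp [rkS]

theorem syncRK (h : act c s = some (i, z, s')) (hw : width s ≤ m) (v) : 1 ≤ cnt v →
    cnt v ≤ width s → RK m width act c (deco s 0 v) = m - width s + cnt v := by
  induction v with
  | nil => simp
  | cons a v ih =>
    intro h1 h2
    cases a with
    | none =>
      simp only [cnt_none] at h2
      have := syncRK1 (m := m) (width := width) h v 1 le_rfl (by omega)
      have e : 0 < width s := by omega
      simp only [deco, RK_cons, this, cnt_none]
      simp [rkS, rk, h, e, pad, this]; omega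
    | some a =>
      simp only [cnt_some] at h1 h2
      have := ih h1 h2
      simp only [deco, RK_cons, this, cnt_some]
      simp [rkS]

theorem syncA (h : act c s = some (i, z, s')) (hi : i < width s) (u) : ∀ n, n + cnt u ≤ i →
    PH m width act c (deco s n u) = deco s' n u ∧ MX m width act c (deco s n u) = cnt u := by
  induction u with
  | nil => intro n _; simp [deco, PH, MX]
  | cons a u ih =>
    intro n h2
    cases a with
    | none =>
      simp only [cnt_none] at h2
      obtain ⟨h3, h4⟩ := ih (n + 1) (by omega)
      have e : n < width s := by omega
      have e2 : n < i := by omega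
      simp only [deco, PH_cons, MX_cons, h3, h4, cnt_none]
      simp [phS, mxS, ph, h, e, e2, fins, deco]; omega
    | some a =>
      simp only [cnt_some] at h2
      obtain ⟨h3, h4⟩ := ih n (by omega)
      simp only [deco, PH_cons, MX_cons, h3, h4, cnt_some]
      simp [phS, mxS]

theorem syncB (h : act c s = some (i, z, s')) (u) : ∀ n, i < n → n + cnt u ≤ width s →
    PH m width act c (deco s n u) = deco s' (n + cnt z - 1) u ∧
    MX m width act c (deco s n u) = cnt u := by
  induction u with
  | nil => intro n _ _; simp [deco, PH, MX]
  | cons a u ih =>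
    intro n h2 h5
    cases a with
    | none =>
      simp only [cnt_none] at h5
      obtain ⟨h3, h4⟩ := ih (n + 1) (by omega) (by omega)
      have e : n < width s := by omega
      have e2 : ¬ n < i := by omega
      have e3 : n ≠ i := by omega
      have e4 : n + 1 + cnt z - 1 = n + cnt z - 1 + 1 := by omega
      simp only [deco, PH_cons, MX_cons, h3, h4, cnt_none, e4]
      simp [phS, mxS, ph, h, e, e2, e3, fins, deco]; omega
    | some a =>
      simp only [cnt_some] at h5
      obtain ⟨h3, h4⟩ := ih n (by omega) (by omega)
      simp only [deco, PH_cons, MX_cons, h3, h4, cnt_some]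
      simp [phS, mxS]

theorem sync (H : HypA m width act) (h : act c s = some (i, z, s')) (u v) (hu : cnt u = i)
    (hx : cnt (u ++ none :: v) = width s) :
    PH m width act c (deco s 0 (u ++ none :: v)) = deco s' 0 (u ++ z ++ v) ∧
    MX m width act c (deco s 0 (u ++ none :: v)) ≤ m ∧
    RK m width act c (deco s 0 (u ++ none :: v)) = m := by
  obtain ⟨h1, h2, h3, h4, h5⟩ := H _ _ _ _ _ h
  refine ⟨?_, ?_, ?_⟩
  · simp only [cnt_append, cnt_none] at hx
    simp only [deco_append, PH_append, deco, PH_cons, Nat.zero_add, hu, cnt_append]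
    rw [(syncA h h1 u 0 (by omega)).1, (syncB h v (i + 1) (by omega) (by omega)).1]
    have e4 : i + 1 + cnt z - 1 = i + cnt z := by omega
    simp [phS, ph, h, h1, fins, e4]
  · simp only [cnt_append, cnt_none] at hx
    simp only [deco_append, MX_append, deco, MX_cons, Nat.zero_add, hu]
    rw [(syncA h h1 u 0 (by omega)).2, (syncB h v (i + 1) (by omega) (by omega)).2]
    have : mxS m width act c (Sum.inl (sym s i 0)) = max 1 (cnt z) := by
      simp [mxS, ph, h, h1, fins, ntCount_deco]
    rw [this]; omega
  · rw [syncRK h h2 _ (by omega) (by omega)]; omega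

def DStep (act : Fin 3 → St → Option (ℕ × List (Option ℕ) × St))
    (p q : St × List (Option ℕ)) : Prop :=
  ∃ c i z u v, act c p.1 = some (i, z, q.1) ∧ p.2 = u ++ none :: v ∧ cnt u = i ∧ q.2 = u ++ z ++ v

noncomputable def GG (H : HypA m width act) (F : HypF act) (s0 : St) : CDGS ℕ :=
  ⟨3, sym s0 0 0, fun c => Pc H F c⟩

theorem fwd (H : HypA m width act) (F : HypF act) (s0 : St) {f} (hf : Good m f)
    {p q : St × List (Option ℕ)} (hp : cnt p.2 = width p.1) (h : DStep act p q) :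
    (GG H F s0).ModeStepB f m (deco p.1 0 p.2) (deco q.1 0 q.2) ∧ cnt q.2 = width q.1 := by
  obtain ⟨s, x⟩ := p
  obtain ⟨s', x'⟩ := q
  obtain ⟨c, i, z, u, v, h1, h2, h3, h4⟩ := h
  simp only at h1 h2 h3 h4 hp
  subst h2 h4
  obtain ⟨a1, a2, a3⟩ := sync H h1 u v h3 hp
  have hA := H _ _ _ _ _ h1
  refine ⟨⟨c, m, ?_, ?_⟩, ?_⟩
  · have := stepsNB_ex H F m m a3 a2
    rw [a1] at this; exact this
  · apply hf.a
    exact (stuck_iff H F _).2 (inert hA.2.2.2.2 _ _).1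
  · simp only [cnt_append, cnt_none] at hp ⊢; omega

theorem bwd (H : HypA m width act) (F : HypF act) (s0 : St) {f} (hf : Good m f)
    {p : St × List (Option ℕ)} (hp : cnt p.2 = width p.1) {y}
    (h : (GG H F s0).ModeStep f (deco p.1 0 p.2) y) :
    ∃ q : St × List (Option ℕ), Relation.ReflTransGen (DStep act) p q ∧ y = deco q.1 0 q.2 ∧
      cnt q.2 = width q.1 := by
  obtain ⟨s, x⟩ := p
  obtain ⟨c, n, h1, h2⟩ := h
  simp only at hp h1 h2
  change StepsN (Pc H F c) n _ y at h1
  change modeOK (Pc H F c) f n y at h2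
  obtain ⟨h3, h4⟩ := stepsN_ok H F n h1
  cases hc : act c s with
  | none =>
    obtain ⟨i1, i2, i3⟩ := inert (m := m) (width := width) hc x 0
    refine ⟨(s, x), .refl, ?_, hp⟩
    rw [← RK_zero (m := m) (width := width) (act := act) (c := c) y (by omega), h4, i2]
  | some τ =>
    obtain ⟨i, z, s'⟩ := τ
    obtain ⟨u, v, rfl, hu⟩ := cnt_split x i (by have := H _ _ _ _ _ hc; omega)
    obtain ⟨a1, a2, a3⟩ := sync H hc u v hu hp
    have hA := H _ _ _ _ _ hc
    have hy : RK m width act c y = 0 := by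
      rcases hf.b _ _ _ h2 (by omega) with h | h
      · omega
      · exact (stuck_iff H F _).1 h
    refine ⟨(s', u ++ z ++ v), .single ⟨c, i, z, u, v, hc, rfl, hu, rfl⟩, ?_, ?_⟩
    · rw [← RK_zero (c := c) y hy, h4, a1]
    · simp only [cnt_append, cnt_none] at hp ⊢; omega

theorem mem_lang_of (H : HypA m width act) (F : HypF act) (s0 : St) {f} (hf : Good m f)
    (hs : width s0 = 1) (hm : 1 ≤ m) (w : List ℕ) (s : St)
    (h : Relation.ReflTransGen (DStep act) (s0, [none]) (s, w.map some)) :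
    w ∈ (GG H F s0).langB f m := by
  have key : ∀ q, Relation.ReflTransGen (DStep act) (s0, [none]) q →
      Relation.ReflTransGen ((GG H F s0).ModeStepB f m) (deco s0 0 [none]) (deco q.1 0 q.2) ∧
      cnt q.2 = width q.1 := by
    intro q hq
    induction hq with
    | refl => exact ⟨.refl, by simp [hs]⟩
    | tail _ h2 ih =>
      obtain ⟨h3, h4⟩ := fwd H F s0 hf ih.2 h2
      exact ⟨ih.1.tail h3, h4⟩
  refine ⟨by simpa using hm, ?_⟩
  obtain ⟨h1, -⟩ := key _ h
  rw [deco_map] at h1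
  rcases Relation.reflTransGen_iff_eq_or_transGen.1 h1 with h2 | h2
  · cases w <;> simp [deco] at h2
  · exact h2

theorem of_mem_lang (H : HypA m width act) (F : HypF act) (s0 : St) {f} (hf : Good m f)
    (hs : width s0 = 1) (w : List ℕ) (h : w ∈ (GG H F s0).lang f) :
    ∃ s, Relation.ReflTransGen (DStep act) (s0, [none]) (s, w.map some) := by
  have key : ∀ y, Relation.ReflTransGen ((GG H F s0).ModeStep f) (deco s0 0 [none]) y →
      ∃ q : St × List (Option ℕ), Relation.ReflTransGen (DStep act) (s0, [none]) q ∧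
        y = deco q.1 0 q.2 ∧ cnt q.2 = width q.1 := by
    intro q hq
    induction hq with
    | refl => exact ⟨_, .refl, rfl, by simp [hs]⟩
    | tail _ h2 ih =>
      obtain ⟨q, h3, rfl, h4⟩ := ih
      obtain ⟨q', h5, h6, h7⟩ := bwd H F s0 hf h4 h2
      exact ⟨q', h3.trans h5, h6, h7⟩
  obtain ⟨⟨s, x⟩, h1, h2, -⟩ := key _ h.to_reflTransGen
  refine ⟨s, ?_⟩
  have h3 : x = w.map some := by
    have := congrArg shp h2
    simp only [shp_deco] at this
    rw [← this]; simp [shp]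
  rw [← h3]; exact h1

theorem GG_lamFree (H : HypA m width act) (F : HypF act) (s0 : St)
    (hz : ∀ c s i z s', act c s = some (i, z, s') → z ≠ []) : (GG H F s0).LamFree := by
  have hd : ∀ (s : St) n x, x ≠ [] → deco s n x ≠ [] := by
    intro s n x hx h
    have := shp_deco s x n
    rw [h] at this; exact hx this.symm
  intro c r hr
  obtain ⟨N, hN, rfl⟩ := (mem_Pc H F r).1 hr
  simp only [rhs]
  by_cases h0 : (unsym St N).2.2 < pad m width (unsym St N).1 (unsym St N).2.1
  · simp [h0]
  · rw [if_neg h0]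
    unfold ph
    split
    · simp
    · rename_i h3
      split_ifs
      · unfold fins
        split_ifs
        · exact hd _ _ _ (by simp)
        · exact hd _ _ _ (hz _ _ _ _ _ h3)
        · exact hd _ _ _ (by simp)
      · simp
end
end Level1

section Level2
variable {Sg : Type} [Denumerable Sg]

abbrev Tran (Sg : Type) := Sg × ℕ × List (Option ℕ) × Sg

def NStep (Trs : List (Tran Sg)) (p q : Sg × List (Option ℕ)) : Prop :=
  ∃ i z u v, (p.1, i, z, q.1) ∈ Trs ∧ p.2 = u ++ none :: v ∧ cnt u = i ∧ q.2 = u ++ z ++ v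

open Classical in
noncomputable def dact (Trs : List (Tran Sg)) (c : Fin 3) (s : Sg × ℕ × ℕ) :
    Option (ℕ × List (Option ℕ) × (Sg × ℕ × ℕ)) :=
  if s.2.1 < Trs.length ∧ s.1 ∈ Trs.map Prod.fst then
    if c = 0 then
      if s.2.2 = 0 then
        match Trs[s.2.1]? with
        | none => none
        | some (σ, i, z, σ') => if σ = s.1 then some (i, z, (σ', 0, 1)) else none
      else none
    else if c = 1 then
      if s.2.2 = 0 then some (0, [none], (s.1, s.2.1 + 1, 1)) else none
    else if s.2.2 = 1 then some (0, [none], (s.1, s.2.1, 0)) else none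
  else none

theorem dact_spec {Trs : List (Tran Sg)} {c s i z s'} (h : dact Trs c s = some (i, z, s')) :
    s.2.1 < Trs.length ∧ s.1 ∈ Trs.map Prod.fst ∧
    ((c = 0 ∧ s.2.2 = 0 ∧ (s.1, i, z, s'.1) ∈ Trs ∧ s'.2 = (0, 1)) ∨
     (c = 1 ∧ s.2.2 = 0 ∧ i = 0 ∧ z = [none] ∧ s' = (s.1, s.2.1 + 1, 1)) ∨
     (c = 2 ∧ s.2.2 = 1 ∧ i = 0 ∧ z = [none] ∧ s' = (s.1, s.2.1, 0))) := by
  unfold dact at h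
  split_ifs at h with h1 h2 h3 h4 h5 h6
  · refine ⟨h1.1, h1.2, Or.inl ⟨h2, h3, ?_⟩⟩
    split at h
    · simp at h
    · rename_i σ i' z' σ' h7
      split_ifs at h with h8
      simp only [Option.some.injEq, Prod.mk.injEq] at h
      obtain ⟨rfl, rfl, rfl⟩ := h
      subst h8
      exact ⟨List.mem_of_getElem? h7, rfl⟩
  · simp only [Option.some.injEq, Prod.mk.injEq] at h
    obtain ⟨rfl, rfl, rfl⟩ := h
    exact ⟨h1.1, h1.2, Or.inr (Or.inl ⟨h4, h5, rfl, rfl, rfl⟩)⟩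
  · simp only [Option.some.injEq, Prod.mk.injEq] at h
    obtain ⟨rfl, rfl, rfl⟩ := h
    exact ⟨h1.1, h1.2, Or.inr (Or.inr ⟨by omega, h6, rfl, rfl, rfl⟩)⟩

def HypT (m : ℕ) (width : Sg → ℕ) (Trs : List (Tran Sg)) : Prop :=
  ∀ σ i z σ', (σ, i, z, σ') ∈ Trs →
    i < width σ ∧ width σ ≤ m ∧ width σ' + 1 = width σ + cnt z ∧ width σ' ≤ m

theorem dact_col {Trs : List (Tran Sg)} {c s} (h : (c = 2 ∧ s.2.2 ≠ 1) ∨ (c ≠ 2 ∧ s.2.2 ≠ 0)) :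
    dact Trs c s = none := by
  by_contra h0
  obtain ⟨⟨i, z, s'⟩, h1⟩ := Option.ne_none_iff_exists'.1 h0
  obtain ⟨_, _, h2⟩ := dact_spec h1
  rcases h with ⟨rfl, h⟩ | ⟨h, h'⟩
  · rcases h2 with h2 | h2 | h2
    · exact absurd h2.1 (by decide)
    · exact absurd h2.1 (by decide)
    · exact h h2.2.1
  · rcases h2 with h2 | h2 | h2
    · exact h' h2.2.1
    · exact h' h2.2.1
    · exact h h2.1

theorem hypA_dact {m : ℕ} {width : Sg → ℕ} {Trs : List (Tran Sg)} (hT : HypT m width Trs) :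
    HypA m (fun s : Sg × ℕ × ℕ => width s.1) (dact Trs) := by
  intro c s i z s' h
  obtain ⟨h1, h2, h3⟩ := dact_spec h
  obtain ⟨⟨σ, i0, z0, σ0⟩, h4, h5⟩ := List.mem_map.1 h2
  have hw := hT _ _ _ _ h4
  simp only at h5
  rw [h5] at hw
  have hpos : 0 < width s.1 := by omega
  rcases h3 with ⟨rfl, h6, h7, h8⟩ | ⟨rfl, h6, rfl, rfl, rfl⟩ | ⟨rfl, h6, rfl, rfl, rfl⟩
  · have := hT _ _ _ _ h7
    refine ⟨this.1, this.2.1, this.2.2.1, this.2.2.2, dact_col (Or.inr ⟨by decide, by simp [h8]⟩)⟩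
  · refine ⟨hpos, hw.2.1, by simp, hw.2.1, dact_col (Or.inr ⟨by decide, by simp⟩)⟩
  · refine ⟨hpos, hw.2.1, by simp, hw.2.1, dact_col (Or.inl ⟨by decide, by simp⟩)⟩

theorem hypF_dact (Trs : List (Tran Sg)) : HypF (dact Trs) := by
  refine Set.Finite.subset ((List.finite_toSet (Trs.map Prod.fst)).prod
    ((Set.finite_Iio Trs.length).prod (Set.finite_Iic 1))) ?_
  rintro s ⟨c, h0⟩
  obtain ⟨⟨i, z, s'⟩, h1⟩ := Option.ne_none_iff_exists'.1 h0
  obtain ⟨h1, h2, h3⟩ := dact_spec h1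
  refine ⟨h2, h1, ?_⟩
  simp only [Set.mem_Iic]
  omega

theorem D_to_N {Trs : List (Tran Sg)} {p q} (h : DStep (dact Trs) p q) :
    Relation.ReflTransGen (NStep Trs) (p.1.1, p.2) (q.1.1, q.2) := by
  obtain ⟨s, x⟩ := p
  obtain ⟨s', x'⟩ := q
  obtain ⟨c, i, z, u, v, h1, h2, h3, h4⟩ := h
  simp only at h1 h2 h3 h4
  obtain ⟨_, _, h5⟩ := dact_spec h1
  rcases h5 with ⟨_, _, h7, _⟩ | ⟨_, _, _, h8, h9⟩ | ⟨_, _, _, h8, h9⟩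
  · exact .single ⟨i, z, u, v, h7, h2, h3, h4⟩
  · subst h8 h9 h2 h4
    simp only [List.append_assoc, List.singleton_append]
    exact .refl
  · subst h8 h9 h2 h4
    simp only [List.append_assoc, List.singleton_append]
    exact .refl

theorem idle_D {Trs : List (Tran Sg)} {c s s' x} (hx : 0 < cnt x)
    (h : dact Trs c s = some (0, [none], s')) : DStep (dact Trs) (s, x) (s', x) := by
  obtain ⟨u, v, rfl, hu⟩ := cnt_split x 0 hx
  exact ⟨c, 0, [none], u, v, h, rfl, hu, by simp⟩

theorem N_to_D {Trs : List (Tran Sg)} {p q} (h : NStep Trs p q) :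
    Relation.ReflTransGen (DStep (dact Trs)) ((p.1, 0, 1), p.2) ((q.1, 0, 1), q.2) := by
  obtain ⟨σ, x⟩ := p
  obtain ⟨σ', x'⟩ := q
  obtain ⟨i, z, u, v, h1, h2, h3, h4⟩ := h
  simp only at h1 h2 h3 h4
  have hx : 0 < cnt x := by rw [h2]; simp
  obtain ⟨j, hj, hj'⟩ := List.getElem_of_mem h1
  have hs : σ ∈ Trs.map Prod.fst := List.mem_map.2 ⟨_, h1, rfl⟩
  have a2 : ∀ k, k < Trs.length → DStep (dact Trs) ((σ, k, 1), x) ((σ, k, 0), x) := by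
    intro k hk
    exact idle_D (c := 2) hx (by simp only [dact]; rw [if_pos ⟨hk, hs⟩]; simp)
  have a1 : ∀ k, k < Trs.length → DStep (dact Trs) ((σ, k, 0), x) ((σ, k + 1, 1), x) := by
    intro k hk
    exact idle_D (c := 1) hx (by simp only [dact]; rw [if_pos ⟨hk, hs⟩]; simp)
  have key : ∀ k, k < Trs.length →
      Relation.ReflTransGen (DStep (dact Trs)) ((σ, 0, 1), x) ((σ, k, 0), x) := by
    intro k
    induction k with
    | zero => intro hk; exact .single (a2 0 hk)
    | succ k ih =>
      intro hk
      exact ((ih (by omega)).tail (a1 k (by omega))).tail (a2 _ hk)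
  refine (key j hj).tail ⟨0, i, z, u, v, ?_, h2, h3, h4⟩
  simp only [dact]
  rw [if_pos ⟨hj, hs⟩]
  simp [hj, hj']

theorem D_iff_N (Trs : List (Tran Sg)) (σ0 : Sg) (w : List (Option ℕ)) :
    (∃ s, Relation.ReflTransGen (DStep (dact Trs)) ((σ0, 0, 1), [none]) (s, w)) ↔
    ∃ σ, Relation.ReflTransGen (NStep Trs) (σ0, [none]) (σ, w) := by
  constructor
  · rintro ⟨s, h⟩
    refine ⟨s.1, ?_⟩
    exact Relation.ReflTransGen.lift' (fun p : (Sg × ℕ × ℕ) × List (Option ℕ) => (p.1.1, p.2))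
      (fun _ _ h => D_to_N h) _ _ h
  · rintro ⟨σ, h⟩
    refine ⟨(σ, 0, 1), ?_⟩
    exact Relation.ReflTransGen.lift' (fun p : Sg × List (Option ℕ) => ((p.1, 0, 1), p.2))
      (fun _ _ h => N_to_D h) _ _ h

theorem level2 {m : ℕ} (hm : 1 ≤ m) {f : Mode} (hf : Good m f) (width : Sg → ℕ)
    (Trs : List (Tran Sg)) (hT : HypT m width Trs) (σ0 : Sg) (h0 : width σ0 = 1) (lf : Bool)
    (hlf : lf = true → ∀ τ ∈ Trs, τ.2.2.1 ≠ []) :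
    ∃ G : CDGS ℕ, G.deg ≤ 3 ∧ (lf = true → G.LamFree) ∧ G.lang f ⊆ G.langB f m ∧
      ∀ w ≠ [], (w ∈ G.lang f ↔
        ∃ σ, Relation.ReflTransGen (NStep Trs) (σ0, [none]) (σ, w.map some)) := by
  have lang_of_B : ∀ (G : CDGS ℕ), G.langB f m ⊆ G.lang f := by
    intro G w hw
    refine Relation.TransGen.mono ?_ _ _ hw.2
    rintro x y ⟨i, n, h1, h2⟩
    refine ⟨i, n, ?_, h2⟩
    clear h2
    induction n generalizing x with
    | zero => exact h1
    | succ n ih => obtain ⟨z, a, _, b⟩ := h1; exact ⟨z, a, ih z b⟩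
  let A := hypA_dact hT
  let F := hypF_dact Trs
  refine ⟨GG A F (σ0, 0, 1), le_rfl, ?_, ?_, ?_⟩
  · intro h
    apply GG_lamFree
    intro c s i z s' hs
    obtain ⟨_, _, h3⟩ := dact_spec hs
    rcases h3 with ⟨_, _, h7, _⟩ | ⟨_, _, _, h8, h9⟩ | ⟨_, _, _, h8, h9⟩
    · exact hlf h _ h7
    · simp [h8]
    · simp [h8]
  · intro w hw
    obtain ⟨s, hs⟩ := of_mem_lang A F (σ0, 0, 1) hf h0 w hw
    exact mem_lang_of A F (σ0, 0, 1) hf h0 hm w s hs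
  · intro w _
    rw [← D_iff_N]
    constructor
    · exact of_mem_lang A F (σ0, 0, 1) hf h0 w
    · rintro ⟨s, hs⟩
      exact lang_of_B _ (mem_lang_of A F (σ0, 0, 1) hf h0 hm w s hs)
end Level2

section Level3

@[simp] theorem nts_append (x y) : nts (x ++ y) = nts x ++ nts y := by simp [nts]
@[simp] theorem nts_nil : nts [] = [] := rfl
@[simp] theorem nts_inl (A y) : nts (Sum.inl A :: y) = A :: nts y := by simp [nts]
@[simp] theorem nts_inr (a y) : nts (Sum.inr a :: y) = nts y := rfl
@[simp] theorem shp_append (x y) : shp (x ++ y) = shp x ++ shp y := by simp [shp]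
@[simp] theorem shp_inl (A y) : shp (Sum.inl A :: y) = none :: shp y := by simp [shp]
@[simp] theorem shp_inr (a y) : shp (Sum.inr a :: y) = some a :: shp y := by simp [shp]

theorem nts_len (y : SForm ℕ) : (nts y).length = ntCount y := by
  induction y with
  | nil => rfl
  | cons a y ih => cases a <;> simp [ih]

theorem cnt_shp (y : SForm ℕ) : cnt (shp y) = (nts y).length := by
  induction y with
  | nil => rfl
  | cons a y ih => cases a <;> simp [ih]

theorem nts_map (L : List ℕ) : nts (L.map Sum.inl) = L := by
  induction L with
  | nil => rfl
  | cons a y ih => simp [ih]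

theorem mem_nts (A y) : A ∈ nts y ↔ Sum.inl A ∈ y := by simp [nts]

theorem canStep_iff (P : List (Rule ℕ)) (y) : (∃ z, RStep P y z) ↔ ∃ r ∈ P, r.1 ∈ nts y := by
  constructor
  · rintro ⟨z, r, hr, u, v, rfl, rfl⟩
    exact ⟨r, hr, by simp⟩
  · rintro ⟨r, hr, h⟩
    obtain ⟨u, v, h⟩ := List.append_of_mem ((mem_nts _ _).1 h)
    exact ⟨_, r, hr, u, v, h, rfl⟩

theorem good_eq (m) : Good m (.eq m) where
  a := by intros; rfl
  b := by intro P n y h _; exact Or.inl h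
  c := by intro P n y y' h; simp only [modeOK]; omega

theorem good_ge (m) : Good m (.ge m) where
  a := by intros; exact le_refl m
  b := by intro P n y h h'; exact Or.inl (le_antisymm h' h)
  c := by intro P n y y' h; simp only [modeOK]; omega

theorem good_conj (m) (f) (ha : ∀ (P : List (Rule ℕ)) y, modeOK P f m y)
    (hc : ∀ (P : List (Rule ℕ)) n y y', modeOK P f n y ↔ modeOK P f (min n (m + 1)) y') :
    Good m (.conj .t f) where
  a := by intro P y h; exact ⟨h, ha P y⟩
  b := by intro P n y h h'; exact Or.inr h.1
  c := by
    intro P n y y' h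
    simp only [modeOK, canStep_iff, h, hc P n y y']

variable (G : CDGS ℕ) (f : Mode) (m K : ℕ)

abbrev Sg3 := ℕ × ℕ × List ℕ

def isSt (σ : Sg3) : Prop :=
  σ.1 ≤ G.deg ∧ σ.2.1 ≤ m + 1 ∧ σ.2.2.length ≤ m ∧ ∀ a ∈ σ.2.2, a < K

def Tr (τ : Tran Sg3) : Prop := isSt G m K τ.1 ∧ isSt G m K τ.2.2.2 ∧
  ((∃ (i : Fin G.deg) (n : ℕ) (r : Rule ℕ) (L1 L2 : List ℕ), r ∈ G.comp i ∧
      τ = ((i.1, n, L1 ++ r.1 :: L2), L1.length, shp r.2,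
        (i.1, min (n + 1) (m + 1), L1 ++ nts r.2 ++ L2)) ∧
      (L1 ++ nts r.2 ++ L2 = [] → modeOK (G.comp i) f (min (n + 1) (m + 1)) [])) ∨
   (∃ (i n : ℕ) (L : List ℕ) (j : Fin G.deg), L ≠ [] ∧
      (i = G.deg ∨ ∃ h : i < G.deg, modeOK (G.comp ⟨i, h⟩) f n (L.map Sum.inl)) ∧
      τ = ((i, n, L), 0, [none], (j.1, 0, L))))

theorem isSt_fin : {σ | isSt G m K σ}.Finite := by
  have h1 : {L : List ℕ | L.length ≤ m ∧ ∀ a ∈ L, a < K}.Finite := by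
    refine ((List.finite_length_le (Fin K) m).image (List.map Fin.val)).subset ?_
    rintro L ⟨h1, h2⟩
    refine ⟨L.pmap (fun a h => ⟨a, h⟩) h2, ?_, ?_⟩
    · simpa using h1
    · simp [List.map_pmap]
  refine Set.Finite.subset ((Set.finite_Iic G.deg).prod ((Set.finite_Iic (m + 1)).prod h1)) ?_
  rintro ⟨i, n, L⟩ ⟨a, b, c⟩
  exact ⟨a, b, c⟩

theorem Tr_fin : {τ | Tr G f m K τ}.Finite := by
  have hz : (insert [none] (⋃ i : Fin G.deg, {z | ∃ r ∈ G.comp i, shp r.2 = z})).Finite := by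
    refine Set.Finite.insert _ (Set.finite_iUnion fun i => ?_)
    exact (List.finite_toSet (G.comp i)).image (fun r => shp r.2)
  refine Set.Finite.subset ((isSt_fin G m K).prod ((Set.finite_Iic m).prod
    (hz.prod (isSt_fin G m K)))) ?_
  rintro τ ⟨h1, h2, h3⟩
  refine ⟨h1, ?_, ?_, h2⟩
  · have hl := h1.2.2.1
    rcases h3 with ⟨i, n, r, L1, L2, _, rfl, _⟩ | ⟨i, n, L, j, _, _, rfl⟩
    · simp at hl ⊢; omega
    · simp
  · rcases h3 with ⟨i, n, r, L1, L2, hr, rfl, _⟩ | ⟨i, n, L, j, _, _, rfl⟩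
    · exact Set.mem_insert_of_mem _ (Set.mem_iUnion.2 ⟨i, r, hr, rfl⟩)
    · exact Set.mem_insert _ _

noncomputable def Trs : List (Tran Sg3) := (Tr_fin G f m K).toFinset.toList

theorem mem_Trs (τ) : τ ∈ Trs G f m K ↔ Tr G f m K τ := by simp [Trs]

theorem hypT_Trs : HypT m (fun σ : Sg3 => σ.2.2.length) (Trs G f m K) := by
  intro σ i z σ' h
  obtain ⟨h1, h2, h3⟩ := (mem_Trs _ _ _ _ _).1 h
  refine ⟨?_, h1.2.2.1, ?_, h2.2.2.1⟩
  · rcases h3 with ⟨i, n, r, L1, L2, _, h4, _⟩ | ⟨i, n, L, j, hL, _, h4⟩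
    · simp only [Prod.mk.injEq] at h4
      obtain ⟨rfl, rfl, rfl, rfl⟩ := h4
      simp
    · simp only [Prod.mk.injEq] at h4
      obtain ⟨rfl, rfl, rfl, rfl⟩ := h4
      exact List.length_pos_iff.2 hL
  · rcases h3 with ⟨i, n, r, L1, L2, _, h4, _⟩ | ⟨i, n, L, j, _, _, h4⟩
    · simp only [Prod.mk.injEq] at h4
      obtain ⟨rfl, rfl, rfl, rfl⟩ := h4
      simp [cnt_shp]; omega
    · simp only [Prod.mk.injEq] at h4
      obtain ⟨rfl, rfl, rfl, rfl⟩ := h4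
      simp

variable {G f m K}

theorem stepsN_snoc {P : List (Rule ℕ)} (n) : ∀ {x y z}, StepsN P n x y → RStep P y z →
    StepsN P (n + 1) x z := by
  induction n with
  | zero => rintro x y z rfl h; exact ⟨z, h, rfl⟩
  | succ n ih =>
    rintro x y z ⟨a, h1, h2⟩ h
    exact ⟨a, h1, ih h2 h⟩

theorem shp_split {y u v} (h : shp y = u ++ none :: v) :
    ∃ u' A v', y = u' ++ Sum.inl A :: v' ∧ shp u' = u ∧ shp v' = v := by
  obtain ⟨u', y', rfl, h1, h2⟩ := List.map_eq_append_iff.1 h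
  obtain ⟨a, v', rfl, h3, h4⟩ := List.map_eq_cons_iff.1 h2
  cases a with
  | inl A => exact ⟨u', A, v', rfl, h1, h4⟩
  | inr a => simp at h3

def Inv (G : CDGS ℕ) (f : Mode) (m : ℕ) (p : Sg3 × List (Option ℕ)) : Prop :=
  ∃ y : SForm ℕ, shp y = p.2 ∧ nts y = p.1.2.2 ∧
    ((p.1.1 = G.deg ∧ y = [Sum.inl G.start]) ∨
     ∃ h : p.1.1 < G.deg, ∃ y0 n', Relation.ReflTransGen (G.ModeStep f) [Sum.inl G.start] y0 ∧
       StepsN (G.comp ⟨p.1.1, h⟩) n' y0 y ∧ p.1.2.1 = min n' (m + 1) ∧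
       (nts y = [] → modeOK (G.comp ⟨p.1.1, h⟩) f n' y))

theorem inv_step (hf : Good m f) {p q} (hp : Inv G f m p) (h : NStep (Trs G f m K) p q) :
    Inv G f m q := by
  obtain ⟨σ, x⟩ := p
  obtain ⟨σ', x'⟩ := q
  obtain ⟨i, z, u, v, h1, h2, h3, h4⟩ := h
  obtain ⟨y, y1, y2, y3⟩ := hp
  simp only at h1 h2 h3 h4 y1 y2 y3
  obtain ⟨_, _, h5⟩ := (mem_Trs _ _ _ _ _).1 h1
  rcases h5 with ⟨i, n, r, L1, L2, hr, h6, h7⟩ | ⟨i, n, L, j, hL, h7, h6⟩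
  · simp only [Prod.mk.injEq] at h6
    obtain ⟨rfl, rfl, rfl, rfl⟩ := h6
    subst h2 h4
    obtain ⟨u', A, v', rfl, rfl, rfl⟩ := shp_split y1
    rw [cnt_shp] at h3
    simp only [nts_append, nts_inl] at y2
    obtain ⟨rfl, h8⟩ := List.append_inj y2 h3
    simp only [List.cons.injEq] at h8
    obtain ⟨rfl, rfl⟩ := h8
    refine ⟨u' ++ r.2 ++ v', by simp, by simp, Or.inr ⟨i.2, ?_⟩⟩
    rcases y3 with ⟨y3, _⟩ | ⟨hi, y0, n', a1, a2, a3, a4⟩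
    · exact absurd y3 (by have := i.2; simp only; omega)
    · simp only at a3
      refine ⟨y0, n' + 1, a1, stepsN_snoc n' a2 ⟨r, hr, u', v', rfl, rfl⟩, by simp only; omega, ?_⟩
      intro h9
      have := h7 (by simpa using h9)
      refine (hf.c _ _ _ [] (by simpa using h9)).2 ?_
      have e : min (n' + 1) (m + 1) = min (n + 1) (m + 1) := by omega
      rw [e]; exact this
  · simp only [Prod.mk.injEq] at h6
    obtain ⟨rfl, rfl, rfl, rfl⟩ := h6
    refine ⟨y, ?_, y2, Or.inr ⟨j.2, y, 0, ?_, rfl, by simp, fun h => absurd (y2.symm.trans h) hL⟩⟩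
    · rw [y1, h2, h4]; simp
    · rcases y3 with ⟨_, rfl⟩ | ⟨hi, y0, n', a1, a2, a3, a4⟩
      · exact .refl
      · refine a1.tail ⟨⟨i, hi⟩, n', a2, ?_⟩
        rcases h7 with h7 | ⟨_, h7⟩
        · simp only at hi; omega
        · simp only at a3 y2
          refine (hf.c _ _ _ (L.map Sum.inl) (by rw [y2, nts_map])).2 ?_
          rw [← a3]; exact h7

theorem sound (hf : Good m f) {w : List ℕ} {σ}
    (h : Relation.ReflTransGen (NStep (Trs G f m K)) ((G.deg, 0, [G.start]), [none])
      (σ, w.map some)) : w ∈ G.lang f := by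
  have key : ∀ q, Relation.ReflTransGen (NStep (Trs G f m K)) ((G.deg, 0, [G.start]), [none]) q →
      Inv G f m q := by
    intro q hq
    induction hq with
    | refl => exact ⟨[Sum.inl G.start], rfl, rfl, Or.inl ⟨rfl, rfl⟩⟩
    | tail _ h2 ih => exact inv_step hf ih h2
  obtain ⟨y, y1, y2, y3⟩ := key _ h
  have hy : y = w.map Sum.inr := by
    clear y2 y3 h
    simp only at y1
    induction w generalizing y with
    | nil => simpa [shp] using y1
    | cons a w ih =>
      cases y with
      | nil => simp [shp] at y1
      | cons b y =>
        cases b with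
        | inl b => simp at y1
        | inr b =>
          simp only [shp_inr, List.map_cons, List.cons.injEq, Option.some.injEq] at y1
          rw [y1.1, ih y y1.2]; rfl
  subst hy
  have hn : nts (w.map Sum.inr) = [] := by
    have := cnt_shp (w.map Sum.inr)
    rw [y1] at this
    have e : cnt (w.map some) = 0 := by clear * -; induction w <;> simp_all
    simp only [e] at this
    exact List.length_eq_zero_iff.1 this.symm
  rcases y3 with ⟨_, y3⟩ | ⟨hi, y0, n', a1, a2, a3, a4⟩
  · cases w <;> simp at y3
  · exact Relation.TransGen.tail' a1 ⟨_, n', a2, a4 hn⟩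

def Bd (G : CDGS ℕ) (K : ℕ) : Prop :=
  G.start < K ∧ ∀ i, ∀ r ∈ G.comp i, ∀ a ∈ nts r.2, a < K

theorem exists_Bd (G : CDGS ℕ) : ∃ K, Bd G K := by
  have h : (insert G.start (⋃ i : Fin G.deg, ⋃ r ∈ {r | r ∈ G.comp i}, {a | a ∈ nts r.2})).Finite := by
    refine Set.Finite.insert _ (Set.finite_iUnion fun i => ?_)
    exact Set.Finite.biUnion (List.finite_toSet _) (fun r _ => List.finite_toSet _)
  obtain ⟨K, hK⟩ := h.bddAbove
  refine ⟨K + 1, Nat.lt_succ_of_le (hK (Set.mem_insert _ _)), ?_⟩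
  intro i r hr a ha
  refine Nat.lt_succ_of_le (hK (Set.mem_insert_of_mem _ ?_))
  exact Set.mem_iUnion.2 ⟨i, Set.mem_biUnion (x := r) hr ha⟩

def okF (m K : ℕ) (y : SForm ℕ) : Prop := (nts y).length ≤ m ∧ ∀ a ∈ nts y, a < K

theorem okF_step (hK : Bd G K) {i} {y z} (hy : okF m K y) (h : RStep (G.comp i) y z)
    (hz : ntCount z ≤ m) : okF m K z := by
  refine ⟨by rw [nts_len]; exact hz, ?_⟩
  obtain ⟨r, hr, u, v, rfl, rfl⟩ := h
  have h1 := hy.2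
  have h2 := hK.2 i r hr
  simp only [nts_append, nts_inl, List.mem_append, List.mem_cons] at h1 ⊢
  rintro a ((h | h) | h)
  · exact h1 a (Or.inl h)
  · exact h2 a h
  · exact h1 a (Or.inr (Or.inr h))

theorem stuck_nil {P : List (Rule ℕ)} {b n y y'} (hy : nts y = []) (h : StepsNB P b n y y') :
    n = 0 ∧ y' = y := by
  cases n with
  | zero => exact ⟨rfl, h.symm⟩
  | succ n =>
    obtain ⟨z, h1, _⟩ := h
    obtain ⟨r, _, h3⟩ := (canStep_iff P y).1 ⟨z, h1⟩
    rw [hy] at h3; simp at h3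

theorem compl_steps (hf : Good m f) (hK : Bd G K) (i : Fin G.deg) (n) : ∀ k y y', okF m K y →
    StepsNB (G.comp i) m n y y' → modeOK (G.comp i) f (k + n) y' →
    Relation.ReflTransGen (NStep (Trs G f m K)) ((i.1, min k (m + 1), nts y), shp y)
      ((i.1, min (k + n) (m + 1), nts y'), shp y') ∧ okF m K y' := by
  induction n with
  | zero => rintro k y y' hy rfl _; exact ⟨.refl, hy⟩
  | succ n ih =>
    rintro k y y' hy ⟨z, h1, h2, h3⟩ h4
    have hz := okF_step hK hy h1 h2
    have e : k + (n + 1) = k + 1 + n := by omega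
    rw [e] at h4 ⊢
    obtain ⟨a1, a2⟩ := ih (k + 1) z y' hz h3 h4
    refine ⟨Relation.ReflTransGen.head ?_ a1, a2⟩
    obtain ⟨r, hr, u, v, rfl, rfl⟩ := h1
    refine ⟨(nts u).length, shp r.2, shp u, shp v, ?_, by simp, cnt_shp u, by simp⟩
    rw [mem_Trs]
    refine ⟨⟨i.2.le, by simp, hy⟩, ⟨i.2.le, by simp, hz⟩, Or.inl ⟨i, min k (m + 1), r, nts u, nts v,
      hr, ?_, ?_⟩⟩
    · have : min (k + 1) (m + 1) = min (min k (m + 1) + 1) (m + 1) := by omega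
      simp [this]
    · intro h5
      obtain ⟨rfl, rfl⟩ := stuck_nil (by simpa using h5) h3
      have := (hf.c _ _ _ [] (by simpa using h5)).1 h4
      have e2 : min (min k (m + 1) + 1) (m + 1) = min (k + 1 + 0) (m + 1) := by omega
      rw [e2]; exact this

theorem complete (hm : 1 ≤ m) (hf : Good m f) (hK : Bd G K) {w : List ℕ} (h : w ∈ G.langB f m) :
    ∃ σ, Relation.ReflTransGen (NStep (Trs G f m K)) ((G.deg, 0, [G.start]), [none])
      (σ, w.map some) := by
  have key : ∀ y, Relation.ReflTransGen (G.ModeStepB f m) [Sum.inl G.start] y →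
      okF m K y ∧ ∃ i n, Relation.ReflTransGen (NStep (Trs G f m K))
        ((G.deg, 0, [G.start]), [none]) ((i, n, nts y), shp y) ∧ n ≤ m + 1 ∧
        (i = G.deg ∨ ∃ h : i < G.deg, modeOK (G.comp ⟨i, h⟩) f n ((nts y).map Sum.inl)) := by
    intro y hy
    induction hy with
    | refl =>
      exact ⟨⟨by simpa using hm, by simpa using hK.1⟩, G.deg, 0, .refl, by omega, Or.inl rfl⟩
    | @tail y y' _ h2 ih =>
      obtain ⟨ho, i, n, h3, h4, h5⟩ := ih
      obtain ⟨j, k, h6, h7⟩ := h2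
      by_cases hn : nts y = []
      · obtain ⟨_, rfl⟩ := stuck_nil hn h6
        exact ⟨ho, i, n, h3, h4, h5⟩
      · obtain ⟨a1, a2⟩ := compl_steps hf hK j k 0 y y' ho h6 (by simpa using h7)
        refine ⟨a2, j.1, min (0 + k) (m + 1), (h3.tail ?_).trans a1, by omega, Or.inr ⟨j.2, ?_⟩⟩
        · have hc : 0 < cnt (shp y) := by rw [cnt_shp]; exact List.length_pos_iff.2 hn
          obtain ⟨u, v, hu, hv⟩ := cnt_split _ _ hc
          refine ⟨0, [none], u, v, ?_, hu, hv, by simp [hu]⟩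
          rw [mem_Trs]
          refine ⟨⟨?_, h4, ho⟩, ⟨j.2.le, by simp, ho⟩, Or.inr ⟨i, n, nts y, j, hn, h5, by simp⟩⟩
          rcases h5 with h5 | ⟨h5, _⟩
          · exact h5.le
          · exact h5.le
        · rw [Nat.zero_add]
          exact (hf.c _ _ _ _ (nts_map _).symm).1 h7
  obtain ⟨_, i, n, h3, _⟩ := key _ h.2.to_reflTransGen
  have e : shp (w.map Sum.inr) = w.map some := by simp [shp]
  rw [e] at h3
  exact ⟨_, h3⟩

theorem good_case (lf : Bool) (m : ℕ) (hm : 1 ≤ m) (f : Mode) (hf : Good m f) :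
    CDFamIndInf ℕ lf f m = CDFamInd ℕ lf 3 f m := by
  ext L
  constructor
  · rintro ⟨G, h1, h2, h3⟩
    obtain ⟨K, hK⟩ := exists_Bd G
    obtain ⟨G', a1, a2, a3, a4⟩ := level2 hm hf _ (Trs G f m K) (hypT_Trs G f m K)
      (G.deg, 0, [G.start]) rfl lf (by
        intro h τ hτ
        obtain ⟨_, _, h5⟩ := (mem_Trs _ _ _ _ _).1 hτ
        rcases h5 with ⟨i, n, r, L1, L2, hr, rfl, h7⟩ | ⟨i, n, L, j, hL, h7, rfl⟩
        · simpa [shp] using h1 h i r hr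
        · simp)
    refine ⟨G', a1, a2, ?_, a3⟩
    unfold EqL at h2 ⊢
    rw [← h2]
    ext w
    simp only [Set.mem_sdiff, Set.mem_singleton_iff]
    refine and_congr_left fun hw => ?_
    rw [a4 w hw]
    exact ⟨fun ⟨σ, h⟩ => sound hf h, fun h => complete hm hf hK (h3 h)⟩
  · rintro ⟨G, _, h⟩
    exact ⟨G, h⟩
end Level3

section LeMode

theorem stepsN_mono {P Q : List (Rule ℕ)} (h : ∀ r ∈ P, r ∈ Q) (n) : ∀ {x y}, StepsN P n x y →
    StepsN Q n x y := by
  induction n with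
  | zero => intro x y h; exact h
  | succ n ih =>
    rintro x y ⟨z, ⟨r, hr, h1⟩, h2⟩
    exact ⟨z, ⟨r, h r hr, h1⟩, ih h2⟩

theorem stepsNB_mono {P Q : List (Rule ℕ)} (h : ∀ r ∈ P, r ∈ Q) (b n) : ∀ {x y},
    StepsNB P b n x y → StepsNB Q b n x y := by
  induction n with
  | zero => intro x y h; exact h
  | succ n ih =>
    rintro x y ⟨z, ⟨r, hr, h1⟩, h3, h2⟩
    exact ⟨z, ⟨r, h r hr, h1⟩, h3, ih h2⟩

def unionG (G : CDGS ℕ) : CDGS ℕ :=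
  ⟨1, G.start, fun _ => (List.finRange G.deg).flatMap G.comp⟩

theorem mem_union (G : CDGS ℕ) (r) : r ∈ (List.finRange G.deg).flatMap G.comp ↔
    ∃ i, r ∈ G.comp i := by simp

theorem le_case (lf : Bool) (m : ℕ) (hm : 1 ≤ m) :
    CDFamIndInf ℕ lf (.le m) m = CDFamInd ℕ lf 3 (.le m) m := by
  ext L
  constructor
  · rintro ⟨G, h1, h2, h3⟩
    have e : (unionG G).lang (.le m) = G.lang (.le m) := by
      ext w
      constructor
      · intro h
        have key : ∀ n x y, StepsN ((List.finRange G.deg).flatMap G.comp) n x y →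
            Relation.ReflTransGen (G.ModeStep (.le m)) x y := by
          intro n
          induction n with
          | zero => rintro x y rfl; exact .refl
          | succ n ih =>
            rintro x y ⟨z, ⟨r, hr, hs⟩, h5⟩
            obtain ⟨i, hi⟩ := (mem_union G r).1 hr
            exact .head ⟨i, 1, ⟨z, ⟨r, hi, hs⟩, rfl⟩, hm⟩ (ih z y h5)
        have h5 : Relation.ReflTransGen (G.ModeStep (.le m)) [Sum.inl G.start] (w.map Sum.inr) := by
          have h6 := Relation.TransGen.to_reflTransGen h
          refine Relation.ReflTransGen.lift' id ?_ _ _ h6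
          rintro x y ⟨i, n, h7, _⟩
          exact key n x y h7
        rcases Relation.reflTransGen_iff_eq_or_transGen.1 h5 with h6 | h6
        · cases w <;> simp at h6
        · exact h6
      · intro h
        refine Relation.TransGen.mono ?_ _ _ h
        rintro x y ⟨i, n, h5, h6⟩
        exact ⟨(0 : Fin 1), n, stepsN_mono (fun r hr => (mem_union G r).2 ⟨i, hr⟩) n h5, h6⟩
    refine ⟨unionG G, by simp [unionG], ?_, by rw [e]; exact h2, ?_⟩
    · intro h i r hr
      obtain ⟨j, hj⟩ := (mem_union G r).1 hr
      exact h1 h j r hj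
    · rw [e]
      intro w hw
      obtain ⟨h4, h5⟩ := h3 hw
      refine ⟨h4, Relation.TransGen.mono ?_ _ _ h5⟩
      rintro x y ⟨i, n, h5, h6⟩
      exact ⟨(0 : Fin 1), n, stepsNB_mono (fun r hr => (mem_union G r).2 ⟨i, hr⟩) m n h5, h6⟩
  · rintro ⟨G, _, h⟩
    exact ⟨G, h⟩

end LeMode

/-- For every m ∈ ℕ (positive) and every Δ ∈ {≤, =, ≥}, three
components suffice under the index-m restriction:
L_m(CD_∞, CF[−λ], Δm) = L_m(CD_3, CF[−λ], Δm) and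
L_m(CD_∞, CF[−λ], (t∧Δm)) = L_m(CD_3, CF[−λ], (t∧Δm)),
both with and without erasing rules. -/
theorem stmt16 (lf : Bool) (m : ℕ) (hm : 1 ≤ m) (d : ℕ → Mode)
    (hd : d = Mode.le ∨ d = Mode.eq ∨ d = Mode.ge) :
    CDFamIndInf ℕ lf (d m) m = CDFamInd ℕ lf 3 (d m) m ∧
    CDFamIndInf ℕ lf (Mode.conj Mode.t (d m)) m =
      CDFamInd ℕ lf 3 (Mode.conj Mode.t (d m)) m := by
  rcases hd with rfl | rfl | rfl
  · refine ⟨le_case lf m hm, good_case lf m hm _ (good_conj m _ ?_ ?_)⟩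
    · intro P y; exact le_refl m
    · intro P n y y'; simp only [modeOK]; omega
  · refine ⟨good_case lf m hm _ (good_eq m), good_case lf m hm _ (good_conj m _ ?_ ?_)⟩
    · intro P y; rfl
    · intro P n y y'; simp only [modeOK]; omega
  · refine ⟨good_case lf m hm _ (good_ge m), good_case lf m hm _ (good_conj m _ ?_ ?_)⟩
    · intro P y; exact le_refl m
    · intro P n y y'; simp only [modeOK]; omega


end CDHybrid
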